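/- Let |ψ⟩ be a state of N = 2L spins whose Schmidt spectrum at every cut α has Renyi entropy bounded as S^α_Renyi ≤ k·(1 + 1/α)·log L + c₀ for some fixed α ∈ (0,1) and constants k, c₀. Fix ε₀ > 0. Then there is a constant C (depending on α, k, c₀, ε₀ but not L) such that choosing bond dimension D_L = ⌈C · L^{2α/(1-α)} · L^{k(1+α)/α}⌉ guarantees the existence of a bond-dimension-D_L MPS |ψ_D⟩ with ‖|ψ⟩ - |ψ_D⟩‖² ≤ ε₀/L. In particular D_L grows only polynomially in L. -/

import Mathlib

noncomputable section

open scoped BigOperators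

/-- Splice a configuration of the first `α` sites with one of the remaining `N - α`
sites into a configuration of all `N` sites. -/
def splice {N d : ℕ} (α : ℕ) (hα : α ≤ N) (x : Fin α → Fin d)
    (r : Fin (N - α) → Fin d) : Fin N → Fin d := fun k =>
  if h : (k : ℕ) < α then x ⟨k, h⟩ else r ⟨(k : ℕ) - α, by omega⟩

/-- The reduced density operator of the first `α` spins of the pure state `ψ`. -/
def reducedDM {N d : ℕ} (ψ : (Fin N → Fin d) → ℂ) (α : ℕ) (hα : α ≤ N) :
    Matrix (Fin α → Fin d) (Fin α → Fin d) ℂ :=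
  Matrix.of fun x y =>
    ∑ r : Fin (N - α) → Fin d, ψ (splice α hα x r) * star (ψ (splice α hα y r))

/-- `φ` is a matrix product state of bond dimension `D` on `N` sites of local
dimension `d`: `φ(i₁,…,i_N) = tr[A^[1]i₁ ⋯ A^[N]i_N]` with `D × D` matrices. -/
def IsMPS {N d : ℕ} (D : ℕ) (φ : (Fin N → Fin d) → ℂ) : Prop :=
  ∃ A : Fin N → Fin d → Matrix (Fin D) (Fin D) ℂ,
    ∀ c : Fin N → Fin d, φ c = ((List.ofFn fun k => A k (c k)).prod).trace

def restr {N d : ℕ} (α : ℕ) (hα : α ≤ N) (c : Fin N → Fin d) : Fin α → Fin d :=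
  fun i => c ⟨i, by omega⟩

def rest {N d : ℕ} (α : ℕ) (hα : α ≤ N) (c : Fin N → Fin d) : Fin (N - α) → Fin d :=
  fun j => c ⟨α + j, by omega⟩

lemma splice_restr_rest {N d : ℕ} (α : ℕ) (hα : α ≤ N) (c : Fin N → Fin d) :
    splice α hα (restr α hα c) (rest α hα c) = c := by
  funext k
  unfold splice restr rest
  split_ifs with h
  · rfl
  · congr 1
    ext
    simp only
    omega

lemma restr_splice {N d : ℕ} (α : ℕ) (hα : α ≤ N) (x : Fin α → Fin d)
    (r : Fin (N - α) → Fin d) : restr α hα (splice α hα x r) = x := by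
  funext k
  unfold splice restr
  simp

lemma rest_splice {N d : ℕ} (α : ℕ) (hα : α ≤ N) (x : Fin α → Fin d)
    (r : Fin (N - α) → Fin d) : rest α hα (splice α hα x r) = r := by
  funext k
  unfold splice rest
  simp

def spliceEquiv {N d : ℕ} (α : ℕ) (hα : α ≤ N) :
    (Fin (N - α) → Fin d) × (Fin α → Fin d) ≃ (Fin N → Fin d) where
  toFun p := splice α hα p.2 p.1
  invFun c := (rest α hα c, restr α hα c)
  left_inv p := by simp [restr_splice, rest_splice]
  right_inv c := splice_restr_rest α hα c

lemma sum_splice {N d : ℕ} (α : ℕ) (hα : α ≤ N) (f : (Fin N → Fin d) → ℝ) :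
    ∑ c, f c = ∑ r : Fin (N - α) → Fin d, ∑ x : Fin α → Fin d, f (splice α hα x r) := by
  rw [← (spliceEquiv α hα).sum_comp f, Fintype.sum_prod_type]
  rfl

/-- Act with `U U†` on the first `α` sites. -/
def Qop {N d D : ℕ} (α : ℕ) (hα : α ≤ N) (U : (Fin α → Fin d) → Fin D → ℂ)
    (φ : (Fin N → Fin d) → ℂ) : (Fin N → Fin d) → ℂ := fun c =>
  ∑ m, U (restr α hα c) m * ∑ y, star (U y m) * φ (splice α hα y (rest α hα c))

def Amat {d D : ℕ} (U : ∀ α : ℕ, (Fin α → Fin d) → Fin D → ℂ) (α : ℕ) (s : Fin d) :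
    Matrix (Fin D) (Fin D) ℂ :=
  Matrix.of fun m m' => ∑ y : Fin α → Fin d,
    star (U α y m) * U (α + 1) (Fin.snoc (α := fun _ => Fin d) y s) m'

def Rmat {N d D : ℕ} (U : ∀ α : ℕ, (Fin α → Fin d) → Fin D → ℂ) (α : ℕ) (c : Fin N → Fin d) :
    Matrix (Fin D) (Fin D) ℂ :=
  ((List.ofFn fun k : Fin N => Amat U k (c k)).drop α).prod

lemma Rmat_succ {N d D : ℕ} (U : ∀ α : ℕ, (Fin α → Fin d) → Fin D → ℂ) (α : ℕ) (hα : α < N)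
    (c : Fin N → Fin d) :
    Rmat U α c = Amat U α (c ⟨α, hα⟩) * Rmat U (α + 1) c := by
  unfold Rmat
  rw [List.drop_eq_getElem_cons (by simpa using hα), List.prod_cons]
  simp

lemma Rmat_splice {N d D : ℕ} (U : ∀ α : ℕ, (Fin α → Fin d) → Fin D → ℂ) (α : ℕ) (hα : α ≤ N)
    (y : Fin α → Fin d) (c : Fin N → Fin d) (β : ℕ) (hβ : α ≤ β) :
    Rmat U β (splice α hα y (rest α hα c)) = Rmat U β c := by
  unfold Rmat
  congr 1
  apply List.ext_getElem
  · simp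
  · intro n h1 h2
    simp only [List.getElem_drop, List.getElem_ofFn]
    congr 1
    unfold splice rest
    simp only
    rw [dif_neg (by omega)]
    congr 1
    ext
    simp only
    omega

def phi {N d D : ℕ} (z : Fin D) (U : ∀ α : ℕ, (Fin α → Fin d) → Fin D → ℂ) (α : ℕ) (hα : α ≤ N) :
    (Fin N → Fin d) → ℂ := fun c =>
  ∑ m, U α (restr α hα c) m * Rmat U α c m z

lemma phi_eq_Qop {N d D : ℕ} (z : Fin D) (U : ∀ α : ℕ, (Fin α → Fin d) → Fin D → ℂ)
    (α : ℕ) (hα : α < N) :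
    (phi z U α hα.le : (Fin N → Fin d) → ℂ) = Qop α hα.le (U α) (phi z U (α + 1) hα) := by
  funext c
  unfold phi Qop
  refine Finset.sum_congr rfl fun m _ => ?_
  congr 1
  rw [Rmat_succ U α hα, Matrix.mul_apply]
  have hs : ∀ y : Fin α → Fin d,
      restr (α + 1) hα (splice α hα.le y (rest α hα.le c))
        = Fin.snoc (α := fun _ => Fin d) y (c ⟨α, hα⟩) := by
    intro y
    funext k
    unfold restr splice rest Fin.snoc
    by_cases h : (k : ℕ) < α
    · simp [h]
      rfl
    · simp only [h, dite_false, cast_eq]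
      congr 1
      ext
      simp only
      omega
  simp only [hs, Rmat_splice U α hα.le _ c (α + 1) (by omega), Amat, Matrix.of_apply,
    Finset.sum_mul, Finset.mul_sum]
  rw [Finset.sum_comm]
  refine Finset.sum_congr rfl fun y _ => Finset.sum_congr rfl fun m' _ => ?_
  ring

lemma mps_core {N d D : ℕ} (hNpos : 0 < N) (ψ : (Fin N → Fin d) → ℂ) (z : Fin D) (ε : ℕ → ℝ)
    (U : ∀ α : ℕ, (Fin α → Fin d) → Fin D → ℂ)
    (h0 : ∀ y m, U 0 y m = if m = z then 1 else 0)
    (hN : ∀ c m, U N c m = if m = z then ψ c else 0)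
    (hstep : ∀ α (hα : α < N), ∀ φ : (Fin N → Fin d) → ℂ,
      ∑ c, Complex.normSq (ψ c - Qop α hα.le (U α) φ c) ≤
        ε α + ∑ c, Complex.normSq (ψ c - φ c)) :
    ∃ φ : (Fin N → Fin d) → ℂ, IsMPS D φ ∧
      ∑ c, Complex.normSq (ψ c - φ c) ≤ ∑ α ∈ Finset.range N, ε α := by
  have key : ∀ j α (h : α + j = N),
      ∑ c, Complex.normSq (ψ c - phi z U α (by omega : α ≤ N) c) ≤ ∑ β ∈ Finset.Ico α N, ε β := by
    intro j
    induction j with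
    | zero =>
      intro α h
      have : α = N := by omega
      subst this
      have : ∀ c, phi z U α (le_refl α) c = ψ c := by
        intro c
        have hr : restr α (le_refl α) c = c := rfl
        have hR : Rmat U α c = 1 := by
          unfold Rmat
          rw [List.drop_of_length_le (by simp)]
          rfl
        unfold phi
        simp [hN, hr, hR]
      simp [this]
    | succ j ih =>
      intro α h
      have hα : α < N := by omega
      rw [phi_eq_Qop z U α hα, Finset.sum_eq_sum_Ico_succ_bot hα]
      have := ih (α + 1) (by omega)
      have := hstep α hα (phi z U (α + 1) hα)
      linarith
  refine ⟨phi z U 0 (Nat.zero_le N), ⟨fun k s => Amat U k s, fun c => ?_⟩, ?_⟩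
  · have hR : (List.ofFn fun k : Fin N => Amat U k (c k)).prod = Rmat U 0 c := by
      simp [Rmat]
    rw [hR]
    unfold phi
    simp only [h0, Matrix.trace, Matrix.diag]
    refine Finset.sum_congr rfl fun m _ => ?_
    by_cases hm : m = z
    · simp [hm]
    · rw [if_neg hm, zero_mul, Rmat_succ U 0 hNpos, Matrix.mul_apply]
      simp only [hm, if_false, zero_mul, Amat, Matrix.of_apply, h0, star_zero,
        Finset.sum_const_zero]
  · have := key N 0 (by omega)
    rwa [← Finset.range_eq_Ico] at this

/-- Pythagoras for truncation in an orthonormal basis. -/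
lemma proj_ineq {ι : Type*} [Fintype ι] [DecidableEq ι] (e : OrthonormalBasis ι ℂ (EuclideanSpace ℂ ι))
    (T : Finset ι) (v w : EuclideanSpace ℂ ι) :
    ‖v - ∑ i ∈ T, inner ℂ (e i) w • e i‖ ^ 2 ≤
      ∑ i, (if i ∈ T then 0 else ‖inner ℂ (e i) v‖ ^ 2) + ‖v - w‖ ^ 2 := by
  rw [← e.sum_sq_norm_inner_right (v - w), ← e.sum_sq_norm_inner_right (v - _),
    ← Finset.sum_add_distrib]
  refine Finset.sum_le_sum fun i _ => ?_
  have : inner ℂ (e i) (∑ j ∈ T, inner ℂ (e j) w • e j) = if i ∈ T then inner ℂ (e i) w else 0 := by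
    rw [inner_sum]
    simp only [inner_smul_right, orthonormal_iff_ite.mp e.orthonormal]
    simp
  rw [inner_sub_right, this]
  split_ifs with h
  · rw [inner_sub_right]; simp
  · rw [sub_zero]
    exact le_add_of_nonneg_right (sq_nonneg _)

lemma tail_bound {ι : Type*} [Fintype ι] (a : ℝ) (ha0 : 0 < a) (ha1 : a < 1)
    (μ : ℕ → ℝ) (hμ : Antitone μ) (h0 : ∀ i, 0 ≤ μ i) (g : ι → ℕ) (hg : Function.Injective g)
    (hz : ∀ i, i ∉ Set.range g → μ i = 0) (D : ℕ) (hD : 0 < D) :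
    ∑ x, (if g x < D then 0 else μ (g x)) ≤
      (∑' i, μ i ^ a) * ((∑' i, μ i ^ a) / D) ^ ((1 - a) / a) := by
  classical
  set S := ∑' i, μ i ^ a with hS
  have hsum : Summable (fun i => μ i ^ a) := by
    apply summable_of_ne_finset_zero (s := Finset.univ.image g)
    intro b hb
    rw [hz b (by simpa using hb), Real.zero_rpow ha0.ne']
  have hnn : ∀ i, 0 ≤ μ i ^ a := fun i => Real.rpow_nonneg (h0 i) a
  have hSx : ∑ x, μ (g x) ^ a ≤ S := by
    have := hsum.sum_le_tsum (Finset.univ.image g) (fun i _ => hnn i)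
    rwa [Finset.sum_image (fun x _ y _ h => hg h)] at this
  have hD' : (0 : ℝ) < D := by exact_mod_cast hD
  have hS0 : 0 ≤ S := tsum_nonneg hnn
  have hb : ∀ n, D ≤ n → μ n ^ a ≤ S / D := by
    intro n hn
    rw [le_div_iff₀ hD']
    have h1 := hsum.sum_le_tsum (Finset.range D) (fun i _ => hnn i)
    have h2 : ∑ i ∈ Finset.range D, μ n ^ a ≤ ∑ i ∈ Finset.range D, μ i ^ a := by
      refine Finset.sum_le_sum fun i hi => ?_
      exact Real.rpow_le_rpow (h0 n) (hμ (by have := Finset.mem_range.mp hi; omega)) ha0.le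
    simp only [Finset.sum_const, Finset.card_range, nsmul_eq_mul] at h2
    linarith
  have he : 0 ≤ (1 - a) / a := by apply div_nonneg <;> linarith
  calc ∑ x, (if g x < D then 0 else μ (g x))
      ≤ ∑ x, μ (g x) ^ a * (S / D) ^ ((1 - a) / a) := by
        refine Finset.sum_le_sum fun x _ => ?_
        split_ifs with h
        · exact mul_nonneg (hnn _) (Real.rpow_nonneg (by positivity) _)
        · push Not at h
          have h3 := Real.rpow_le_rpow (hnn _) (hb _ h) he
          have h4 : μ (g x) = μ (g x) ^ a * (μ (g x) ^ a) ^ ((1 - a) / a) := by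
            rw [← Real.rpow_mul (h0 _), ← Real.rpow_add' (h0 _)]
            · rw [mul_div_cancel₀ _ ha0.ne']; simp
            · rw [mul_div_cancel₀ _ ha0.ne']; simp
          calc μ (g x) = _ := h4
            _ ≤ _ := mul_le_mul_of_nonneg_left h3 (hnn _)
    _ = (∑ x, μ (g x) ^ a) * (S / D) ^ ((1 - a) / a) := by rw [Finset.sum_mul]
    _ ≤ _ := mul_le_mul_of_nonneg_right hSx (Real.rpow_nonneg (by positivity) _)

lemma eig_sum {N d : ℕ} (ψ : (Fin N → Fin d) → ℂ) (α : ℕ) (hα : α ≤ N)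
    (hH : (reducedDM ψ α hα).IsHermitian) (x : Fin α → Fin d) :
    ∑ r : Fin (N - α) → Fin d,
      ‖inner ℂ (hH.eigenvectorBasis x) (WithLp.toLp 2 fun y => ψ (splice α hα y r))‖ ^ 2
      = hH.eigenvalues x := by
  have h1 := hH.eigenvalues_eq x
  rw [h1]
  set e := hH.eigenvectorBasis x
  have : ((∑ r : Fin (N - α) → Fin d,
      ‖inner ℂ e (WithLp.toLp 2 fun y => ψ (splice α hα y r))‖ ^ 2 : ℝ) : ℂ)
      = (star (WithLp.ofLp e) ⬝ᵥ (reducedDM ψ α hα).mulVec (WithLp.ofLp e)) := by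
    push_cast
    simp only [← Complex.mul_conj', EuclideanSpace.inner_eq_star_dotProduct, dotProduct,
      Matrix.mulVec, reducedDM, Matrix.of_apply, map_sum, map_mul, Pi.star_apply,
      Finset.sum_mul, Finset.mul_sum]
    have hst : ∀ w : ℂ, (starRingEnd ℂ) w = star w := fun _ => rfl
    calc _ = ∑ y : Fin α → Fin d, ∑ r : Fin (N - α) → Fin d, ∑ i : Fin α → Fin d,
          star (e.ofLp i) * (ψ (splice α hα i r) * star (ψ (splice α hα y r)) * e.ofLp y) := by
          rw [Finset.sum_comm]
          refine Finset.sum_congr rfl fun y _ => Finset.sum_congr rfl fun r _ =>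
            Finset.sum_congr rfl fun i _ => ?_
          rw [hst, hst, star_star]
          ring
      _ = ∑ y : Fin α → Fin d, ∑ i : Fin α → Fin d, ∑ r : Fin (N - α) → Fin d,
          star (e.ofLp i) * (ψ (splice α hα i r) * star (ψ (splice α hα y r)) * e.ofLp y) :=
          Finset.sum_congr rfl fun y _ => Finset.sum_comm
      _ = _ := Finset.sum_comm
  rw [← this]
  exact (Complex.ofReal_re _).symm

lemma step_bound {N d D : ℕ} (ψ : (Fin N → Fin d) → ℂ) (α : ℕ) (hα : α ≤ N)
    (hH : (reducedDM ψ α hα).IsHermitian) (g : (Fin α → Fin d) → ℕ) (hg : Function.Injective g)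
    (φ : (Fin N → Fin d) → ℂ) :
    ∑ c, Complex.normSq (ψ c - Qop α hα (fun y (m : Fin D) =>
      ∑ x, if g x = m then hH.eigenvectorBasis x y else 0) φ c) ≤
      ∑ x, (if g x < D then 0 else hH.eigenvalues x) + ∑ c, Complex.normSq (ψ c - φ c) := by
  classical
  rw [sum_splice α hα, sum_splice α hα (fun c => Complex.normSq (ψ c - φ c))]
  set e := hH.eigenvectorBasis with he
  set T : Finset (Fin α → Fin d) := Finset.univ.filter fun x => g x < D with hT
  let v : (Fin (N - α) → Fin d) → EuclideanSpace ℂ (Fin α → Fin d) :=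
    fun r => WithLp.toLp 2 fun y => ψ (splice α hα y r)
  let w : (Fin (N - α) → Fin d) → EuclideanSpace ℂ (Fin α → Fin d) :=
    fun r => WithLp.toLp 2 fun y => φ (splice α hα y r)
  have hl : ∑ x, (if g x < D then 0 else hH.eigenvalues x)
      = ∑ r, ∑ i, (if i ∈ T then 0 else ‖inner ℂ (e i) (v r)‖ ^ 2) := by
    rw [Finset.sum_comm]
    refine Finset.sum_congr rfl fun x _ => ?_
    by_cases h : g x < D
    · simp [hT, h]
    · simp only [hT, h, Finset.mem_filter, Finset.mem_univ, true_and, if_false]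
      exact (eig_sum ψ α hα hH x).symm
  rw [hl, ← Finset.sum_add_distrib]
  refine Finset.sum_le_sum fun r _ => ?_
  have hp := proj_ineq e T (v r) (w r)
  rw [EuclideanSpace.norm_sq_eq (v r - w r), EuclideanSpace.norm_sq_eq (v r - _)] at hp
  simp only [Complex.normSq_eq_norm_sq]
  refine le_trans (le_of_eq ?_) hp
  refine Finset.sum_congr rfl fun x _ => ?_
  congr 2
  simp only [Qop, restr_splice, rest_splice, PiLp.sub_apply]
  congr 1
  have e1 : ∀ m : Fin D, ∑ y, star (∑ x', if g x' = m then e x' y else 0) * φ (splice α hα y r)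
      = ∑ j, if g j = m then inner ℂ (e j) (w r) else 0 := by
    intro m
    simp only [star_sum, Finset.sum_mul]
    rw [Finset.sum_comm]
    refine Finset.sum_congr rfl fun j _ => ?_
    by_cases h : g j = m
    · simp only [h, if_true, EuclideanSpace.inner_eq_star_dotProduct, dotProduct, w, Pi.star_apply]
      exact Finset.sum_congr rfl fun y _ => mul_comm _ _
    · simp [h]
  simp only [e1]
  have e2 : ∀ m : Fin D, (∑ i, if g i = m then e i x else 0) *
      (∑ j, if g j = m then inner ℂ (e j) (w r) else 0) =
      ∑ i, if g i = m then inner ℂ (e i) (w r) * e i x else 0 := by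
    intro m
    rw [Finset.sum_mul]
    refine Finset.sum_congr rfl fun i _ => ?_
    by_cases h : g i = m
    · have : ∀ j, g j = m ↔ j = i := fun j => by rw [← h]; exact hg.eq_iff
      simp [this, mul_comm]
    · simp [h]
  simp only [e2]
  rw [Finset.sum_comm, hT, Finset.sum_filter, WithLp.ofLp_sum, Finset.sum_apply]
  refine Finset.sum_congr rfl fun i _ => ?_
  by_cases h : g i < D
  · have : ∀ m : Fin D, g i = m ↔ m = ⟨g i, h⟩ := fun m => by
      rw [Fin.ext_iff]; exact eq_comm
    simp [this, h]
  · have : ∀ m : Fin D, ¬ g i = m := fun m hm => h (hm ▸ m.2)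
    simp [this, h]

lemma final_bound (a k c₀ ε₀ : ℝ) (ha0 : 0 < a) (ha1 : a < 1) (hε₀ : 0 < ε₀) (L : ℕ) (hL : 1 ≤ L)
    (D : ℕ) (hD : Real.exp (c₀ + a / (1 - a) * (Real.log 2 - Real.log ε₀)) *
      (L : ℝ) ^ (2 * a / (1 - a)) * (L : ℝ) ^ (k * (1 + a) / a) ≤ D) (S : ℝ) (hS : 0 ≤ S)
    (hlog : (1 / (1 - a)) * Real.log S ≤ k * (1 + 1 / a) * Real.log L + c₀) :
    S * (S / D) ^ ((1 - a) / a) ≤ ε₀ / (2 * L ^ 2) := by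
  have hLpos : (0 : ℝ) < L := by exact_mod_cast hL
  have h1a : 0 < 1 - a := by linarith
  rcases hS.eq_or_lt with h | hSpos
  · rw [← h]; simp; positivity
  have hXpos : 0 < Real.exp (c₀ + a / (1 - a) * (Real.log 2 - Real.log ε₀)) *
      (L : ℝ) ^ (2 * a / (1 - a)) * (L : ℝ) ^ (k * (1 + a) / a) := by positivity
  have hDpos : (0 : ℝ) < D := hXpos.trans_le hD
  have hDl := Real.log_le_log hXpos hD
  rw [Real.log_mul (by positivity) (by positivity), Real.log_mul (by positivity) (by positivity),
    Real.log_exp, Real.log_rpow hLpos, Real.log_rpow hLpos] at hDl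
  rw [← Real.log_le_log_iff (by positivity) (by positivity),
    Real.log_mul (by positivity) (by positivity), Real.log_rpow (by positivity),
    Real.log_div (by positivity) (by positivity), Real.log_div (by positivity) (by positivity),
    Real.log_mul (by positivity) (by positivity), Real.log_pow]
  set s := Real.log S
  set l := Real.log (L : ℝ)
  set δ := Real.log (D : ℝ)
  have e1 : s + (1 - a) / a * (s - δ) = (1 - a) / a * ((1 / (1 - a)) * s - δ) := by
    field_simp; ring
  rw [e1]
  have h2 : (1 / (1 - a)) * s - δ ≤ (k * (1 + 1 / a) * l + c₀) -
    (c₀ + a / (1 - a) * (Real.log 2 - Real.log ε₀) + 2 * a / (1 - a) * l + k * (1 + a) / a * l) := by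
    linarith
  refine (mul_le_mul_of_nonneg_left h2 (by positivity)).trans (le_of_eq ?_)
  push_cast
  field_simp
  ring

/-- **Polynomial bond dimension suffices under logarithmic entropy scaling.** Fix
`a ∈ (0,1)`, `k`, `c₀` and `ε₀ > 0`. There is a constant `C > 0` (independent of `L`)
such that: for every normalized state `ψ` of `N = 2L` spins whose sorted Schmidt
spectrum `μ α` at each cut `α` has Renyi entropy
`S^a(μ α) = (1/(1-a)) log Σ_i (μ α i)^a ≤ k (1 + 1/a) log L + c₀`, the bond dimension
`D_L = ⌈C · L^(2a/(1-a)) · L^(k(1+a)/a)⌉` admits an MPS `ψD` with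
`‖ψ - ψD‖² ≤ ε₀ / L`. In particular `D_L` grows only polynomially in `L`. -/
theorem mps_polynomial_bond_dimension (a k c₀ ε₀ : ℝ)
    (ha0 : 0 < a) (ha1 : a < 1) (hε₀ : 0 < ε₀) (d : ℕ) (hd : 1 ≤ d) :
    ∃ C : ℝ, 0 < C ∧
      ∀ (L : ℕ), 1 ≤ L →
      ∀ (ψ : (Fin (2 * L) → Fin d) → ℂ),
        (∑ c, Complex.normSq (ψ c) = 1) →
        ∀ (hH : ∀ (α : ℕ) (hα : α ≤ 2 * L), (reducedDM ψ α hα).IsHermitian)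
          (μ : ℕ → ℕ → ℝ),
          (∀ α : ℕ, ∀ hα : 1 ≤ α ∧ α ≤ 2 * L - 1,
            Antitone (μ α) ∧ (∀ i, 0 ≤ μ α i) ∧
            ∃ g : (Fin α → Fin d) → ℕ, Function.Injective g ∧
              (∀ x, μ α (g x) = (hH α (by omega)).eigenvalues x) ∧
              (∀ i, i ∉ Set.range g → μ α i = 0)) →
          (∀ α : ℕ, 1 ≤ α → α ≤ 2 * L - 1 →
            (1 / (1 - a)) * Real.log (∑' i, μ α i ^ a) ≤
              k * (1 + 1 / a) * Real.log L + c₀) →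
          ∃ ψD : (Fin (2 * L) → Fin d) → ℂ,
            IsMPS (⌈C * (L : ℝ) ^ (2 * a / (1 - a)) * (L : ℝ) ^ (k * (1 + a) / a)⌉₊) ψD ∧
            ∑ c, Complex.normSq (ψ c - ψD c) ≤ ε₀ / L := by
  set C := Real.exp (c₀ + a / (1 - a) * (Real.log 2 - Real.log ε₀)) with hC
  have hCpos : 0 < C := Real.exp_pos _
  refine ⟨C, hCpos, ?_⟩
  intro L hL ψ _ hH μ hμ hS
  have hLpos : (0 : ℝ) < L := by exact_mod_cast hL
  set D := ⌈C * (L : ℝ) ^ (2 * a / (1 - a)) * (L : ℝ) ^ (k * (1 + a) / a)⌉₊ with hD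
  have hXpos : 0 < C * (L : ℝ) ^ (2 * a / (1 - a)) * (L : ℝ) ^ (k * (1 + a) / a) := by positivity
  have hDpos : 0 < D := Nat.ceil_pos.mpr hXpos
  have hDge : C * (L : ℝ) ^ (2 * a / (1 - a)) * (L : ℝ) ^ (k * (1 + a) / a) ≤ D := Nat.le_ceil _
  let z : Fin D := ⟨0, hDpos⟩
  have hbound := final_bound a k c₀ ε₀ ha0 ha1 hε₀ L hL D (by rw [← hC]; exact hDge)
  set η : ℝ := ε₀ / (2 * L ^ 2) with hη
  have hη0 : 0 < η := by positivity
  have hex : ∀ α : ℕ, ∃ U : (Fin α → Fin d) → Fin D → ℂ,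
      (α = 0 → ∀ y m, U y m = if m = z then 1 else 0) ∧
      (∀ h : 2 * L = α, ∀ y m, U y m = if m = z then ψ (fun i => y (Fin.cast h i)) else 0) ∧
      (∀ (hα : α < 2 * L), ∀ φ : (Fin (2 * L) → Fin d) → ℂ,
        ∑ c, Complex.normSq (ψ c - Qop α hα.le U φ c) ≤
          η + ∑ c, Complex.normSq (ψ c - φ c)) := by
    intro α
    rcases Nat.eq_zero_or_pos α with h0 | h0
    · subst h0
      refine ⟨fun _ m => if m = z then 1 else 0, fun _ _ _ => rfl, fun h => by omega, ?_⟩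
      intro hα φ
      have : ∀ c, Qop 0 hα.le (fun _ m => if m = z then 1 else 0) φ c = φ c := by
        intro c
        have h1 : ∀ y : Fin 0 → Fin d, splice 0 hα.le y (rest 0 hα.le c) = c := by
          intro y
          rw [Subsingleton.elim y (restr 0 hα.le c)]
          exact splice_restr_rest 0 hα.le c
        simp [Qop, h1]
      simp only [this]
      linarith
    · rcases lt_or_ge α (2 * L) with h1 | h1
      · obtain ⟨hanti, hnn, g, hg, hge, hgz⟩ := hμ α ⟨h0, by omega⟩
        refine ⟨fun y (m : Fin D) =>
          ∑ x, if g x = m then (hH α h1.le).eigenvectorBasis x y else 0,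
          fun h => by omega, fun h => by omega, fun hα φ => ?_⟩
        refine (step_bound ψ α hα.le (hH α h1.le) g hg φ).trans ?_
        have ht := tail_bound a ha0 ha1 (μ α) hanti hnn g hg hgz D hDpos
        simp only [hge] at ht
        have := hbound (∑' i, μ α i ^ a) (tsum_nonneg fun i => Real.rpow_nonneg (hnn i) a)
          (hS α h0 (by omega))
        linarith
      · refine ⟨fun y m => if m = z then
          (if h : 2 * L = α then ψ (fun i => y (Fin.cast h i)) else 0) else 0,
          fun h => by omega, ?_, fun h => by omega⟩
        intro h y m
        simp [h]
  choose U hU0 hUN hUs using hex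
  obtain ⟨φ, hφ, hle⟩ := mps_core (by omega) ψ z (fun _ => η) U (hU0 0 rfl)
    (fun c m => hUN (2 * L) rfl c m) (fun α hα φ => hUs α hα φ)
  refine ⟨φ, hφ, hle.trans (le_of_eq ?_)⟩
  simp only [Finset.sum_const, Finset.card_range, nsmul_eq_mul, hη]
  push_cast
  field_simp
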